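/- Let n ≥ 1 and k ≥ 4 be natural numbers. Let A be a real-valued family indexed by k-tuples of indices in {1,…,n}, invariant under every permutation of its first k−2 arguments and under swapping its last two arguments, and satisfying the symmetrization condition: for every tuple (p₁,…,p_k) one has Σ_{1≤i<j≤k} A(p₁,…,p̂ᵢ,…,p̂ⱼ,…,p_k, pᵢ, pⱼ) = 0, where the hats mean that the entries pᵢ, pⱼ are removed from their positions and placed (in this order) as the last two arguments. Then 2·T + (k−2)·((k−3)·N + 4·M) = 0, where T := Σ_p A(p)² (sum over all k-tuples p), M := Σ_{K,a,b,c} A(K,a,b,c)·A(K,c,a,b) (sum over all (k−3)-tuples K and indices a,b,c in {1,…,n}), and N := Σ_{K,a,b,c,d} A(K,c,d,a,b)·A(K,a,b,c,d) (sum over all (k−4)-tuples K and indices a,b,c,d in {1,…,n}). -/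

import Mathlib

/-- The order-preserving embedding of `Fin (k-2)` into `Fin k` avoiding the positions
`i` and `j` (intended for `i < j`). -/
def dropPair {k : ℕ} (i j : Fin k) (m : Fin (k - 2)) : Fin k :=
  if (m : ℕ) < (i : ℕ) then ⟨(m : ℕ), by have := m.isLt; omega⟩
  else if (m : ℕ) + 1 < (j : ℕ) then ⟨(m : ℕ) + 1, by have := m.isLt; omega⟩
  else ⟨(m : ℕ) + 2, by have := m.isLt; omega⟩

/-- The tuple obtained from `p` by removing the entries at positions `i` and `j`
(keeping the order of the remaining entries) and placing `p i`, `p j` (in this order)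
as the last two entries. -/
def hatTuple {n k : ℕ} (p : Fin k → Fin n) (i j : Fin k) : Fin k → Fin n :=
  fun m =>
    if h : (m : ℕ) < k - 2 then p (dropPair i j ⟨(m : ℕ), h⟩)
    else if (m : ℕ) = k - 2 then p i
    else p j

/-- The `k`-tuple whose first `k-3` entries are given by `K` and whose last three
entries are `a`, `b`, `c` (in this order). -/
def padEnd3 {n k : ℕ} (K : Fin (k - 3) → Fin n) (a b c : Fin n) : Fin k → Fin n :=
  fun m =>
    if h : (m : ℕ) < k - 3 then K ⟨(m : ℕ), h⟩
    else if (m : ℕ) = k - 3 then a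
    else if (m : ℕ) = k - 2 then b
    else c

/-- The `k`-tuple whose first `k-4` entries are given by `K` and whose last four
entries are `a`, `b`, `c`, `d` (in this order). -/
def padEnd4 {n k : ℕ} (K : Fin (k - 4) → Fin n) (a b c d : Fin n) : Fin k → Fin n :=
  fun m =>
    if h : (m : ℕ) < k - 4 then K ⟨(m : ℕ), h⟩
    else if (m : ℕ) = k - 4 then a
    else if (m : ℕ) = k - 3 then b
    else if (m : ℕ) = k - 2 then c
    else d

theorem hat_inj {k : ℕ} (hk : 4 ≤ k) (i j : Fin k) (hij : i < j) :
    Function.Injective (fun m : Fin k =>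
      if h : (m : ℕ) < k - 2 then dropPair i j ⟨(m : ℕ), h⟩
      else if (m : ℕ) = k - 2 then i else j) := by
  intro a b hab
  have ha := a.isLt
  have hb := b.isLt
  have hi := i.isLt
  have hj := j.isLt
  have hij' : (i : ℕ) < (j : ℕ) := hij
  apply Fin.ext
  have h2 := congrArg Fin.val hab
  simp only [dropPair] at h2
  split_ifs at h2 <;> (try simp only [] at h2) <;> omega

theorem hat_comp {n k : ℕ} (p : Fin k → Fin n) (i j : Fin k) :
    hatTuple p i j = fun m => p ((fun m : Fin k =>
      if h : (m : ℕ) < k - 2 then dropPair i j ⟨(m : ℕ), h⟩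
      else if (m : ℕ) = k - 2 then i else j) m) := by
  funext m
  simp only [hatTuple]
  split_ifs <;> rfl

theorem hat_perm {k : ℕ} (hk : 4 ≤ k) (i j : Fin k) (hij : i < j) :
    ∃ τ : Equiv.Perm (Fin k), (∀ (n : ℕ) (p : Fin k → Fin n), hatTuple p i j = fun m => p (τ m)) ∧
      τ ⟨k - 2, by omega⟩ = i ∧ τ ⟨k - 1, by omega⟩ = j := by
  refine ⟨Equiv.ofBijective _ (Finite.injective_iff_bijective.1 (hat_inj hk i j hij)), ?_, ?_, ?_⟩
  · intro n p
    exact hat_comp p i j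
  · simp
  · have h1 : ¬ (k - 1 < k - 2) := by omega
    have h2 : ¬ (k - 1 = k - 2) := by omega
    simp [h1, h2]

section
variable {n k : ℕ} (A : (Fin k → Fin n) → ℝ) (u v : Fin k)

theorem stab_inv (_huv : u ≠ v)
    (h1 : ∀ (p : Fin k → Fin n) (σ : Equiv.Perm (Fin k)),
      σ u = u → σ v = v → A (fun m => p (σ m)) = A p)
    (h2 : ∀ p : Fin k → Fin n, A (fun m => p (Equiv.swap u v m)) = A p)
    (p : Fin k → Fin n) (σ : Equiv.Perm (Fin k))
    (hσ : (σ u = u ∧ σ v = v) ∨ (σ u = v ∧ σ v = u)) :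
    A (fun m => p (σ m)) = A p := by
  rcases hσ with ⟨a, b⟩ | ⟨a, b⟩
  · exact h1 p σ a b
  · rw [← h2 (fun m => p (σ m))]
    exact h1 p (σ * Equiv.swap u v) (by simp [b]) (by simp [a])

theorem G_eq (huv : u ≠ v)
    (h1 : ∀ (p : Fin k → Fin n) (σ : Equiv.Perm (Fin k)),
      σ u = u → σ v = v → A (fun m => p (σ m)) = A p)
    (h2 : ∀ p : Fin k → Fin n, A (fun m => p (Equiv.swap u v m)) = A p)
    (f g σ : Equiv.Perm (Fin k))
    (hσ : (σ u = u ∧ σ v = v) ∨ (σ u = v ∧ σ v = u))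
    (hfg : (f u = σ (g u) ∧ f v = σ (g v)) ∨ (f u = σ (g v) ∧ f v = σ (g u))) :
    ∑ p, A p * A (fun m => p (f m)) = ∑ p, A p * A (fun m => p (g m)) := by
  refine Fintype.sum_equiv (Equiv.arrowCongr σ.symm (Equiv.refl (Fin n))) _ _ fun p => ?_
  have e1 : A (Equiv.arrowCongr σ.symm (Equiv.refl (Fin n)) p) = A p :=
    stab_inv A u v huv h1 h2 p σ hσ
  rw [e1]
  congr 1
  have := stab_inv A u v huv h1 h2 (fun m => p (σ (g m))) (g⁻¹ * σ⁻¹ * f)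
    (by rcases hfg with ⟨a, b⟩ | ⟨a, b⟩ <;> simp [a, b])
  simp at this
  rw [this]
  rfl
end

theorem sum3 {n k : ℕ} (hk : 4 ≤ k) (F : (Fin k → Fin n) → ℝ) :
    ∑ K : Fin (k - 3) → Fin n, ∑ a : Fin n, ∑ b : Fin n, ∑ c : Fin n, F (padEnd3 K a b c)
      = ∑ p, F p := by
  have : ∑ x : (Fin (k - 3) → Fin n) × Fin n × Fin n × Fin n,
      F (padEnd3 x.1 x.2.1 x.2.2.1 x.2.2.2) = ∑ p, F p := by
    refine Fintype.sum_bijective _ ?_ _ _ (fun x => rfl)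
    rw [Function.bijective_iff_has_inverse]
    refine ⟨fun p => (fun m => p ⟨m, by omega⟩, p ⟨k - 3, by omega⟩, p ⟨k - 2, by omega⟩,
      p ⟨k - 1, by omega⟩), ?_, ?_⟩
    · rintro ⟨K, a, b, c⟩
      have q1 : ¬ (k - 2 < k - 3) := by omega
      have q2 : ¬ (k - 1 < k - 3) := by omega
      have q3 : ¬ (k - 2 = k - 3) := by omega
      have q4 : ¬ (k - 1 = k - 3) := by omega
      have q5 : ¬ (k - 1 = k - 2) := by omega
      simp [padEnd3, q1, q2, q3, q4, q5]
    · intro p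
      funext m
      simp only [padEnd3]
      split_ifs <;> congr 1 <;> apply Fin.ext <;> simp only [] <;> omega
  rw [← this]
  simp only [Fintype.sum_prod_type]

theorem sum4 {n k : ℕ} (hk : 4 ≤ k) (F : (Fin k → Fin n) → ℝ) :
    ∑ K : Fin (k - 4) → Fin n, ∑ a : Fin n, ∑ b : Fin n, ∑ c : Fin n, ∑ d : Fin n,
      F (padEnd4 K a b c d) = ∑ p, F p := by
  have : ∑ x : (Fin (k - 4) → Fin n) × Fin n × Fin n × Fin n × Fin n,
      F (padEnd4 x.1 x.2.1 x.2.2.1 x.2.2.2.1 x.2.2.2.2) = ∑ p, F p := by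
    refine Fintype.sum_bijective _ ?_ _ _ (fun x => rfl)
    rw [Function.bijective_iff_has_inverse]
    refine ⟨fun p => (fun m => p ⟨m, by omega⟩, p ⟨k - 4, by omega⟩, p ⟨k - 3, by omega⟩,
      p ⟨k - 2, by omega⟩, p ⟨k - 1, by omega⟩), ?_, ?_⟩
    · rintro ⟨K, a, b, c, d⟩
      have q1 : ¬ (k - 2 < k - 4) := by omega
      have q2 : ¬ (k - 1 < k - 4) := by omega
      have q3 : ¬ (k - 3 < k - 4) := by omega
      have q4 : ¬ (k - 1 = k - 4) := by omega
      have q5 : ¬ (k - 2 = k - 4) := by omega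
      have q6 : ¬ (k - 3 = k - 4) := by omega
      have q7 : ¬ (k - 1 = k - 3) := by omega
      have q8 : ¬ (k - 2 = k - 3) := by omega
      have q9 : ¬ (k - 1 = k - 2) := by omega
      simp [padEnd4, q1, q2, q3, q4, q5, q6, q7, q8, q9]
    · intro p
      funext m
      simp only [padEnd4]
      split_ifs <;> congr 1 <;> apply Fin.ext <;> simp only [] <;> omega
  rw [← this]
  simp only [Fintype.sum_prod_type]

theorem hat3 {n k : ℕ} (hk : 4 ≤ k) (K : Fin (k - 3) → Fin n) (a b c : Fin n) :
    hatTuple (padEnd3 K a b c) (⟨k - 3, by omega⟩ : Fin k) ⟨k - 2, by omega⟩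
      = padEnd3 K c a b := by
  funext m
  have hm := m.isLt
  simp only [hatTuple, dropPair, padEnd3]
  split_ifs <;> first | rfl | (exfalso; omega) | (exfalso; simp only [] at *; omega)

theorem hat4 {n k : ℕ} (hk : 4 ≤ k) (K : Fin (k - 4) → Fin n) (a b c d : Fin n) :
    hatTuple (padEnd4 K a b c d) (⟨k - 4, by omega⟩ : Fin k) ⟨k - 3, by omega⟩
      = padEnd4 K c d a b := by
  funext m
  have hm := m.isLt
  simp only [hatTuple, dropPair, padEnd4]
  split_ifs <;> first | rfl | (exfalso; omega) | (exfalso; simp only [] at *; omega)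

theorem count_pairs (m : ℕ) (N : ℝ) :
    2 * ∑ i ∈ Finset.range m, ∑ j ∈ Finset.range m, (if i < j then N else 0)
      = (m : ℝ) * (m - 1) * N := by
  induction m with
  | zero => simp
  | succ m ih =>
    have e1 : ∑ i ∈ Finset.range m, (if i < m then N else 0) = m * N := by
      rw [Finset.sum_congr rfl (fun i hi => if_pos (Finset.mem_range.1 hi))]
      simp
    have e2 : ∑ j ∈ Finset.range m, (if m < j then N else 0) = 0 :=
      Finset.sum_eq_zero fun j hj => if_neg (by have := Finset.mem_range.1 hj; omega)
    simp only [Finset.sum_range_succ, Finset.sum_add_distrib, e1, e2, lt_irrefl, if_false]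
    push_cast
    linarith

theorem count_all (m : ℕ) (T M N : ℝ) :
    2 * ∑ i : Fin (m + 2), ∑ j : Fin (m + 2),
      (if (i : ℕ) < j then (if (i : ℕ) = m then T else if m ≤ (j : ℕ) then M else N) else 0)
      = 2 * T + m * ((m - 1) * N + 4 * M) := by
  have e := fun i : ℕ => Fin.sum_univ_eq_sum_range (fun j : ℕ =>
    (if i < j then (if i = m then T else if m ≤ j then M else N) else 0)) (m + 2)
  simp only [e]
  rw [Fin.sum_univ_eq_sum_range (fun i : ℕ => ∑ j ∈ Finset.range (m + 2),
    (if i < j then (if i = m then T else if m ≤ j then M else N) else 0)) (m + 2)]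
  have e1 : ∀ i ∈ Finset.range m, ∑ j ∈ Finset.range (m + 2),
      (if i < j then (if i = m then T else if m ≤ j then M else N) else 0)
      = ∑ j ∈ Finset.range m, (if i < j then N else 0) + 2 * M := by
    intro i hi
    have hi' := Finset.mem_range.1 hi
    rw [Finset.sum_range_succ, Finset.sum_range_succ]
    have : ∀ j ∈ Finset.range m,
        (if i < j then (if i = m then T else if m ≤ j then M else N) else 0)
        = (if i < j then N else 0) := by
      intro j hj
      have hj' := Finset.mem_range.1 hj
      rw [if_neg (by omega : ¬ i = m), if_neg (by omega : ¬ m ≤ j)]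
    rw [Finset.sum_congr rfl this]
    rw [if_pos hi', if_pos (by omega : i < m + 1), if_neg (by omega : ¬ i = m), if_neg (by omega : ¬ i = m), if_pos le_rfl,
      if_pos (by omega : m ≤ m + 1)]
    ring
  have e2 : ∑ j ∈ Finset.range (m + 2),
      (if m < j then (if m = m then T else if m ≤ j then M else N) else 0) = T := by
    rw [Finset.sum_range_succ, Finset.sum_eq_zero]
    · simp
    · intro j hj
      have hj' := Finset.mem_range.1 hj
      rw [if_neg (by omega)]
  have e3 : ∑ j ∈ Finset.range (m + 2),
      (if m + 1 < j then (if m + 1 = m then T else if m ≤ j then M else N) else 0) = 0 := by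
    apply Finset.sum_eq_zero
    intro j hj
    have hj' := Finset.mem_range.1 hj
    rw [if_neg (by omega)]
  rw [Finset.sum_range_succ, Finset.sum_range_succ, e2, e3, Finset.sum_congr rfl e1,
    Finset.sum_add_distrib]
  have := count_pairs m N
  simp only [Finset.sum_const, Finset.card_range, nsmul_eq_mul]
  linarith

/-- The symmetrized Ricci identity (equation (sym ric)):
for a tensor `A`, symmetric in its first `k-2` slots and in its last two slots,
whose full symmetrization vanishes, one has `2T + (k-2)((k-3)N + 4M) = 0`. -/
theorem sym_ric_identity (n k : ℕ) (hn : 1 ≤ n) (hk : 4 ≤ k)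
    (A : (Fin k → Fin n) → ℝ)
    (hsym₁ : ∀ (p : Fin k → Fin n) (σ : Equiv.Perm (Fin k)),
      (∀ m : Fin k, k - 2 ≤ (m : ℕ) → σ m = m) → A (fun m => p (σ m)) = A p)
    (hsym₂ : ∀ p : Fin k → Fin n,
      A (fun m => p (Equiv.swap (⟨k - 2, by omega⟩ : Fin k) (⟨k - 1, by omega⟩ : Fin k) m))
        = A p)
    (hsym₀ : ∀ p : Fin k → Fin n,
      ∑ i : Fin k, ∑ j : Fin k, (if i < j then A (hatTuple p i j) else 0) = 0) :
    2 * (∑ p : Fin k → Fin n, (A p) ^ 2)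
      + ((k : ℝ) - 2) *
        (((k : ℝ) - 3) *
            (∑ K : Fin (k - 4) → Fin n, ∑ a : Fin n, ∑ b : Fin n, ∑ c : Fin n, ∑ d : Fin n,
              A (padEnd4 K c d a b) * A (padEnd4 K a b c d))
          + 4 *
            (∑ K : Fin (k - 3) → Fin n, ∑ a : Fin n, ∑ b : Fin n, ∑ c : Fin n,
              A (padEnd3 K a b c) * A (padEnd3 K c a b))) = 0 := by
  have hN := sum4 hk (fun p => A (hatTuple p (⟨k - 4, by omega⟩ : Fin k) ⟨k - 3, by omega⟩) * A p)
  have hM := sum3 hk (fun p => A p * A (hatTuple p (⟨k - 3, by omega⟩ : Fin k) ⟨k - 2, by omega⟩))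
  simp only [hat4 hk] at hN
  simp only [hat3 hk] at hM
  rw [hN, hM]
  clear hN hM
  obtain ⟨u, hu⟩ : ∃ u : Fin k, u = ⟨k - 2, by omega⟩ := ⟨_, rfl⟩
  obtain ⟨v, hv⟩ : ∃ v : Fin k, v = ⟨k - 1, by omega⟩ := ⟨_, rfl⟩
  obtain ⟨w, hw⟩ : ∃ w : Fin k, w = ⟨k - 3, by omega⟩ := ⟨_, rfl⟩
  obtain ⟨x, hx⟩ : ∃ x : Fin k, x = ⟨k - 4, by omega⟩ := ⟨_, rfl⟩
  have hu' : (u : ℕ) = k - 2 := by rw [hu]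
  have hv' : (v : ℕ) = k - 1 := by rw [hv]
  have hw' : (w : ℕ) = k - 3 := by rw [hw]
  have hx' : (x : ℕ) = k - 4 := by rw [hx]
  have huv : u ≠ v := by intro h; rw [h] at hu'; omega
  have h1 : ∀ (p : Fin k → Fin n) (σ : Equiv.Perm (Fin k)),
      σ u = u → σ v = v → A (fun m => p (σ m)) = A p := by
    intro p σ a b
    refine hsym₁ p σ fun m hm => ?_
    have hm' := m.isLt
    rcases (by omega : (m : ℕ) = k - 2 ∨ (m : ℕ) = k - 1) with h | h
    · rw [show m = u from Fin.ext (by omega)]; exact a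
    · rw [show m = v from Fin.ext (by omega)]; exact b
  have h2 : ∀ p : Fin k → Fin n, A (fun m => p (Equiv.swap u v m)) = A p := by
    rw [hu, hv]; exact hsym₂
  rw [← hu, ← hw, ← hx]
  have key : ∀ (i j i' j' : Fin k), i < j → i' < j' → ∀ σ : Equiv.Perm (Fin k),
      ((σ u = u ∧ σ v = v) ∨ (σ u = v ∧ σ v = u)) → σ i' = i → σ j' = j →
      ∑ p, A p * A (hatTuple p i j) = ∑ p, A p * A (hatTuple p i' j') := by
    intro i j i' j' hij hij' σ hσ a b
    obtain ⟨f, f1, f2, f3⟩ := hat_perm hk i j hij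
    obtain ⟨g, g1, g2, g3⟩ := hat_perm hk i' j' hij'
    rw [← hu] at f2 g2
    rw [← hv] at f3 g3
    simp only [f1, g1]
    exact G_eq A u v huv h1 h2 f g σ hσ (Or.inl (by rw [f2, f3, g2, g3, a, b]; simp))
  have hxw : x < w := by rw [Fin.lt_def]; omega
  have hwu : w < u := by rw [Fin.lt_def]; omega
  have hul : u < v := by rw [Fin.lt_def]; omega
  have main : ∀ i j : Fin k, ∑ p, A p * (if i < j then A (hatTuple p i j) else 0)
      = if (i : ℕ) < j then (if (i : ℕ) = k - 2 then ∑ p, A p ^ 2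
        else if k - 2 ≤ (j : ℕ) then ∑ p, A p * A (hatTuple p w u)
        else ∑ p, A p * A (hatTuple p x w)) else 0 := by
    intro i j
    have hi := i.isLt
    have hj := j.isLt
    by_cases hij : i < j
    · have hij' : (i : ℕ) < j := hij
      rw [if_pos hij']
      simp only [if_pos hij]
      split_ifs with c1 c2
      · obtain ⟨f, f1, f2, f3⟩ := hat_perm hk i j hij
        rw [← hu] at f2
        rw [← hv] at f3
        have iu : i = u := Fin.ext (by omega)
        have jv : j = v := Fin.ext (by omega)
        refine Finset.sum_congr rfl fun p _ => ?_
        rw [f1, h1 p f (by rw [f2, iu]) (by rw [f3, jv])]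
        ring
      · have iu : i ≠ u := fun h => c1 (by rw [h, hu'])
        have iv : i ≠ v := fun h => by rw [h] at hij'; omega
        rcases (by omega : (j : ℕ) = k - 2 ∨ (j : ℕ) = k - 1) with h | h
        · have ju : j = u := Fin.ext (by omega)
          subst ju
          refine key _ _ _ _ hij hwu (Equiv.swap w i) (Or.inl ⟨?_, ?_⟩) ?_ ?_
          · exact Equiv.swap_apply_of_ne_of_ne hwu.ne' iu.symm
          · exact Equiv.swap_apply_of_ne_of_ne (hwu.trans hul).ne' iv.symm
          · simp
          · exact Equiv.swap_apply_of_ne_of_ne hwu.ne' iu.symm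
        · have jv : j = v := Fin.ext (by omega)
          subst jv
          have a1 : Equiv.swap w i u = u := Equiv.swap_apply_of_ne_of_ne hwu.ne' iu.symm
          have a2 : Equiv.swap w i j = j :=
            Equiv.swap_apply_of_ne_of_ne (hwu.trans hul).ne' iv.symm
          refine key _ _ _ _ hij hwu (Equiv.swap u j * Equiv.swap w i) (Or.inr ⟨?_, ?_⟩) ?_ ?_
          · simp [a1]
          · simp [a2]
          · simp [Equiv.swap_apply_of_ne_of_ne iu iv]
          · simp [a1]
      · have iu : i < u := by rw [Fin.lt_def]; omega
        have ju : j < u := by rw [Fin.lt_def]; omega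
        have b1 : Equiv.swap x i w ≠ i := by
          intro h
          have : Equiv.swap x i w = Equiv.swap x i x := by simp [h]
          exact hxw.ne' ((Equiv.swap x i).injective this)
        have b2 : Equiv.swap x i u = u :=
          Equiv.swap_apply_of_ne_of_ne (hxw.trans hwu).ne' iu.ne'
        have b3 : Equiv.swap x i v = v :=
          Equiv.swap_apply_of_ne_of_ne ((hxw.trans hwu).trans hul).ne' (iu.trans hul).ne'
        have b4 : u ≠ Equiv.swap x i w := fun h =>
          hwu.ne' ((Equiv.swap x i).injective (b2.trans h))
        have b5 : v ≠ Equiv.swap x i w := fun h =>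
          (hwu.trans hul).ne' ((Equiv.swap x i).injective (b3.trans h))
        refine key _ _ _ _ hij hxw (Equiv.swap (Equiv.swap x i w) j * Equiv.swap x i)
          (Or.inl ⟨?_, ?_⟩) ?_ ?_
        · rw [Equiv.Perm.mul_apply, b2]
          exact Equiv.swap_apply_of_ne_of_ne b4 ju.ne'
        · rw [Equiv.Perm.mul_apply, b3]
          exact Equiv.swap_apply_of_ne_of_ne b5 (ju.trans hul).ne'
        · rw [Equiv.Perm.mul_apply, Equiv.swap_apply_left]
          exact Equiv.swap_apply_of_ne_of_ne b1.symm hij.ne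
        · rw [Equiv.Perm.mul_apply, Equiv.swap_apply_left]
    · have hij' : ¬ (i : ℕ) < j := hij
      rw [if_neg hij']
      simp [hij]
  have tot : ∑ i : Fin k, ∑ j : Fin k, ∑ p, A p * (if i < j then A (hatTuple p i j) else 0)
      = 0 := by
    have : ∑ p, A p * ∑ i : Fin k, ∑ j : Fin k, (if i < j then A (hatTuple p i j) else 0) = 0 := by
      simp only [hsym₀, mul_zero, Finset.sum_const_zero]
    refine Eq.trans ?_ this
    simp only [Finset.mul_sum]
    conv_rhs => rw [Finset.sum_comm]
    refine Finset.sum_congr rfl fun i _ => ?_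
    rw [Finset.sum_comm]
  simp only [main] at tot
  have hcomm : ∑ p, A (hatTuple p x w) * A p = ∑ p, A p * A (hatTuple p x w) :=
    Finset.sum_congr rfl fun p _ => mul_comm _ _
  rw [hcomm]
  generalize ∑ p, A p * A (hatTuple p x w) = N at *
  generalize ∑ p, A p * A (hatTuple p w u) = M at *
  generalize ∑ p, A p ^ 2 = T at *
  clear main key h1 h2 hsym₀ hsym₁ hsym₂ hcomm
  clear hxw hwu hul huv hu hv hw hx hu' hv' hw' hx' u v w x A
  obtain ⟨m, rfl⟩ : ∃ m, k = m + 2 := ⟨k - 2, by omega⟩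
  have := count_all m T M N
  simp only [Nat.add_sub_cancel] at tot
  rw [tot] at this
  push_cast
  linarith
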